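/- arXiv:1507.07186 — 2 statements merged into one kernel-verified Lean document; each statement's English description precedes it below -/
import Mathlib

section
/- Let A be a C*-algebra and let B be a norm-closed *-subalgebra of A which is a Chebyshev subspace of A. If B has no multiplicative unit (there is no e ∈ B with e b = b = b e for all b ∈ B), then B = A. -/
/-!
Suppose `b ∈ B` is self-adjoint of norm one and orthogonal to `y`, and let `v` be the best
approximation of `y` in `B`. Since `1 - b²` is a contraction fixing `y`, both `v - b² v` and
`v - v b²` approximate `y` as well as `v` does, so by uniqueness `b v = v b = 0`. Now `y - v` and
`‖y - v‖ b` are orthogonal elements of equal norm, so `v - ‖y - v‖ b` is also a best approximation,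
and uniqueness forces `y = v ∈ B`. Thus `B` contains everything orthogonal to one of its nonzero
self-adjoint elements.

If `B` has no unit, the support projection of a self-adjoint element with finite spectrum is not a
unit, so something in `B` is orthogonal to it and can be added to enlarge the spectrum. Three
nonzero spectral values suffice: functional calculus turns them into orthogonal `h₁, h₂, h₃` with
local units `e₁, e₂, e₃`, and for the partition `1 = (1 - e₁ - e₂ - e₃) + e₁ + e₂ + e₃` each corner
`u x w` of an arbitrary `x` is orthogonal to some `hₖ`, hence lies in `B`.
-/

open Unitization

/-- A subset `V` is Chebyshev if every point has exactly one nearest point in `V`; Chebyshev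
subspaces are the linear instances. -/
def IsChebyshev {X : Type*} [SeminormedAddCommGroup X] (V : Set X) : Prop :=
  ∀ x : X, ∃! v : X, v ∈ V ∧ ‖x - v‖ = Metric.infDist x V

lemma IsChebyshev.exists_forall_norm_sub_le_imp_eq {X : Type*} [SeminormedAddCommGroup X]
    {V : Set X} (hV : IsChebyshev V) (x : X) :
    ∃ v ∈ V, ∀ w ∈ V, ‖x - w‖ ≤ ‖x - v‖ → w = v := by
  obtain ⟨v, ⟨hv, hxv⟩, huniq⟩ := hV x
  refine ⟨v, hv, fun w hw hle ↦ huniq w ⟨hw, le_antisymm (hle.trans_eq hxv) ?_⟩⟩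
  simpa only [dist_eq_norm] using Metric.infDist_le_dist_of_mem (x := x) hw

section Quasispectrum

lemma isQuasiregular_add_iff {R : Type*} [NonUnitalSemiring R] {a b : R}
    (hab : a * b = 0) (hba : b * a = 0) :
    IsQuasiregular (a + b) ↔ IsQuasiregular a ∧ IsQuasiregular b := by
  have mul_eq {x y : R} (hxy : x * y = 0) :
      PreQuasiregular.equiv x * PreQuasiregular.equiv y = PreQuasiregular.equiv (y + x) :=
    PreQuasiregular.equiv.symm.injective <| by simp [hxy]
  have hcomm : Commute (PreQuasiregular.equiv a) (PreQuasiregular.equiv b) := by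
    rw [Commute, SemiconjBy, mul_eq hab, mul_eq hba, add_comm]
  simp only [isQuasiregular_iff', ← hcomm.isUnit_mul_iff, mul_eq hab, add_comm b]

lemma quasispectrum_add_eq_union {R A : Type*} [CommSemiring R] [NonUnitalRing A] [Module R A]
    [IsScalarTower R A A] [SMulCommClass R A A] {a b : A} (hab : a * b = 0) (hba : b * a = 0) :
    quasispectrum R (a + b) = quasispectrum R a ∪ quasispectrum R b := by
  ext r
  have key (hr : IsUnit r) : IsQuasiregular (-(hr.unit⁻¹ • (a + b))) ↔
      IsQuasiregular (-(hr.unit⁻¹ • a)) ∧ IsQuasiregular (-(hr.unit⁻¹ • b)) := by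
    rw [smul_add, neg_add]
    apply isQuasiregular_add_iff <;> simp [smul_mul_assoc, mul_smul_comm, hab, hba]
  simp only [quasispectrum, Set.mem_union, Set.mem_ofPred_eq, key]
  by_cases hr : IsUnit r <;> simp [hr, imp_iff_not_or]

end Quasispectrum

section Projections

lemma exists_isSelfAdjoint_orthogonal_of_isStarProjection {B : Type*} [NonUnitalNormedRing B]
    [StarRing B] [CStarRing B] (hB : ¬ ∃ e : B, ∀ b, e * b = b ∧ b * e = b) {p : B}
    (hp : IsStarProjection p) : ∃ d : B, IsSelfAdjoint d ∧ d ≠ 0 ∧ p * d = 0 := by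
  by_contra! hcon
  have mul_left_eq (b : B) : p * b = b := by
    by_contra hb
    refine hcon _ (.mul_star_self (b - p * b)) ?_ ?_
    · rwa [Ne, CStarRing.mul_star_self_eq_zero_iff, sub_eq_zero, eq_comm]
    · rw [← mul_assoc, mul_sub, ← mul_assoc, hp.isIdempotentElem.eq, sub_self, zero_mul]
  refine hB ⟨p, fun b ↦ ⟨mul_left_eq b, star_injective ?_⟩⟩
  rw [star_mul, hp.isSelfAdjoint.star_eq, mul_left_eq]

variable {B : Type*} [NonUnitalCStarAlgebra B]

lemma exists_isStarProjection_of_finite_quasispectrum {c : B} (hc : IsSelfAdjoint c)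
    (hfin : (quasispectrum ℝ c).Finite) : ∃ p : B, IsStarProjection p ∧ c * p = c := by
  let χ : ℝ → ℝ := fun x ↦ if x = 0 then 0 else 1
  have χ_cont : ContinuousOn χ (quasispectrum ℝ c) := hfin.continuousOn χ
  have χ_zero : χ 0 = 0 := if_pos rfl
  have χ_mul_self (x : ℝ) : χ x * χ x = χ x := by simp [χ]
  have mul_χ (x : ℝ) : x * χ x = x := by simp +contextual [χ]
  refine ⟨cfcₙ χ c, ⟨?_, cfcₙ_predicate χ c⟩, ?_⟩
  · rw [IsIdempotentElem, ← cfcₙ_mul χ χ c χ_cont χ_zero χ_cont χ_zero]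
    simp only [χ_mul_self]
  · calc c * cfcₙ χ c = cfcₙ (fun x ↦ x) c * cfcₙ χ c := by rw [cfcₙ_id' ℝ c]
      _ = cfcₙ (fun x ↦ x * χ x) c :=
          (cfcₙ_mul (fun x ↦ x) χ c continuousOn_id rfl χ_cont χ_zero).symm
      _ = c := by simp only [mul_χ, cfcₙ_id' ℝ c]

lemma exists_mem_quasispectrum_ne_zero {d : B} (hd : IsSelfAdjoint d) (hd0 : d ≠ 0) :
    ∃ x ∈ quasispectrum ℝ d, x ≠ 0 := by
  by_contra! h
  exact hd0 (CFC.eq_zero_of_quasispectrum_eq_zero (R := ℝ) d h hd)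

lemma exists_insert_subset_quasispectrum
    (hB : ¬ ∃ e : B, ∀ b, e * b = b ∧ b * e = b) {c : B} (hc : IsSelfAdjoint c)
    (hfin : (quasispectrum ℝ c).Finite) (r : ℝ) :
    ∃ c' : B, IsSelfAdjoint c' ∧ insert r (quasispectrum ℝ c) ⊆ quasispectrum ℝ c' := by
  obtain ⟨p, hp, hcp⟩ := exists_isStarProjection_of_finite_quasispectrum hc hfin
  obtain ⟨d, hd, hd0, hpd⟩ := exists_isSelfAdjoint_orthogonal_of_isStarProjection hB hp
  obtain ⟨x, hx, hx0⟩ := exists_mem_quasispectrum_ne_zero hd hd0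
  have hcd : c * d = 0 := by rw [← hcp, mul_assoc, hpd, mul_zero]
  have hdc : d * c = 0 := by
    simpa [hc.star_eq, hd.star_eq] using congr(star $hcd)
  have hr : r ∈ quasispectrum ℝ ((r / x) • d) := by
    rw [← cfcₙ_const_mul_id (r / x) d, cfcₙ_map_quasispectrum (r / x * ·) d]
    exact ⟨x, hx, div_mul_cancel₀ r hx0⟩
  refine ⟨c + (r / x) • d, hc.add (.smul (.all _) hd), ?_⟩
  rw [quasispectrum_add_eq_union (by rw [mul_smul_comm, hcd, smul_zero])
    (by rw [smul_mul_assoc, hdc, smul_zero])]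
  exact Set.insert_subset (.inr hr) Set.subset_union_left

lemma exists_finset_card_eq_subset_quasispectrum
    (hB : ¬ ∃ e : B, ∀ b, e * b = b ∧ b * e = b) (n : ℕ) :
    ∃ c : B, IsSelfAdjoint c ∧
      ∃ s : Finset ℝ, s.card = n ∧ 0 ∉ s ∧ (s : Set ℝ) ⊆ quasispectrum ℝ c := by
  induction n with
  | zero => exact ⟨0, .zero B, ∅, by simp⟩
  | succ n ih =>
    obtain ⟨c, hc, s, hcard, hs0, hs⟩ := ih
    by_cases hfin : (quasispectrum ℝ c).Finite
    · obtain ⟨r, hr⟩ := Infinite.exists_notMem_finset (insert 0 s)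
      obtain ⟨hr0, hrs⟩ : r ≠ 0 ∧ r ∉ s := by simpa using hr
      obtain ⟨c', hc', hsub⟩ := exists_insert_subset_quasispectrum hB hc hfin r
      refine ⟨c', hc', insert r s, by rw [Finset.card_insert_of_notMem hrs, hcard],
        by simp [hr0.symm, hs0], ?_⟩
      rw [Finset.coe_insert]
      exact (Set.insert_subset_insert hs).trans hsub
    · obtain ⟨t, ht, htcard⟩ :=
        (Set.Infinite.sdiff hfin (Set.finite_singleton 0)).exists_subset_card_eq (n + 1)
      exact ⟨c, hc, t, htcard, fun h0 ↦ (ht h0).2 rfl, ht.trans Set.sdiff_subset⟩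

end Projections

section LocalUnits

/-- Nonzero self-adjoint elements `h i` with local units `e i`: multiplication by `e i`, from either
side, fixes `h i` and annihilates `h j` for `j ≠ i`. Such a system with three members lets
any `x` be cut into pieces `u i * x * u j`, each orthogonal to some `h k`. -/
structure IsLocalUnitSystem {ι B : Type*} [NonUnitalRing B] [StarRing B] (e h : ι → B) : Prop where
  isSelfAdjoint : ∀ i, IsSelfAdjoint (h i)
  ne_zero : ∀ i, h i ≠ 0
  commute : ∀ i j, Commute (e i) (h j)
  mul_self : ∀ i, e i * h i = h i
  mul_of_ne : ∀ i j, i ≠ j → e i * h j = 0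

namespace IsLocalUnitSystem

lemma map {ι A B F : Type*} [NonUnitalRing A] [StarRing A] [NonUnitalRing B] [StarRing B]
    [FunLike F B A] [NonUnitalRingHomClass F B A] [StarHomClass F B A] {e h : ι → B}
    (H : IsLocalUnitSystem e h) (φ : F) (hφ : Function.Injective φ) :
    IsLocalUnitSystem (φ ∘ e) (φ ∘ h) where
  isSelfAdjoint i := (H.isSelfAdjoint i).map φ
  ne_zero i := (map_ne_zero_iff φ hφ).2 (H.ne_zero i)
  commute i j := (H.commute i j).map φ
  mul_self i := by simp only [Function.comp_apply, ← map_mul, H.mul_self]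
  mul_of_ne i j hij := by simp only [Function.comp_apply, ← map_mul, H.mul_of_ne i j hij, map_zero]

lemma sum_mul {ι B : Type*} [Fintype ι] [NonUnitalRing B] [StarRing B] {e h : ι → B}
    (H : IsLocalUnitSystem e h) (j : ι) : (∑ i, e i) * h j = h j := by
  rw [Finset.sum_mul, Fintype.sum_eq_single j (fun i hij ↦ H.mul_of_ne i j hij), H.mul_self]

lemma exists_sum_eq_one_and_orthogonal {ι B : Type*} [Fintype ι] [Ring B] [StarRing B]
    {e h : ι → B} (H : IsLocalUnitSystem e h) :
    ∃ u : Option ι → B, ∑ i, u i = 1 ∧ ∀ i k, i ≠ some k → u i * h k = 0 ∧ h k * u i = 0 := by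
  let u : Option ι → B := fun o ↦ o.elim (1 - ∑ i, e i) e
  have u_none : u none = 1 - ∑ i, e i := rfl
  have u_commute (i : Option ι) (k : ι) : Commute (u i) (h k) := by
    cases i with
    | none => exact (Commute.one_left _).sub_left (Commute.sum_left _ _ _ fun i _ ↦ H.commute i k)
    | some i => exact H.commute i k
  have u_mul (i : Option ι) (k : ι) (hik : i ≠ some k) : u i * h k = 0 := by
    cases i with
    | none => rw [u_none, _root_.sub_mul, one_mul, H.sum_mul, sub_self]
    | some i => exact H.mul_of_ne i k (by simpa using hik)
  refine ⟨u, ?_, fun i k hik ↦ ⟨u_mul i k hik, ?_⟩⟩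
  · rw [Fintype.sum_option, u_none]
    exact sub_add_cancel 1 _
  · rw [← (u_commute i k).eq, u_mul i k hik]

end IsLocalUnitSystem

lemma exists_continuous_bumps_of_finite {X : Type*} [TopologicalSpace X] [T4Space X] {s : Set X}
    (hs : s.Finite) :
    ∃ f : X → C(X, ℝ), (∀ x, f x x = 1) ∧ s.Pairwise fun x y ↦ f x * f y = 0 := by
  obtain ⟨U, hU, hdisj⟩ := hs.t2_separation
  have bump (x : X) : ∃ f : C(X, ℝ), Set.EqOn f 0 (U x)ᶜ ∧ f x = 1 := by
    obtain ⟨f, hf0, hf1, -⟩ := exists_continuous_zero_one_of_isClosed (hU x).2.isClosed_compl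
      (isClosed_singleton (x := x)) (Set.disjoint_singleton_right.2 fun h ↦ h (hU x).1)
    exact ⟨f, hf0, hf1 rfl⟩
  choose f hf0 hf1 using bump
  refine ⟨f, hf1, fun x hx y hy hxy ↦ ContinuousMap.ext fun z ↦ ?_⟩
  by_cases hz : z ∈ U x
  · simp [hf0 y (Set.disjoint_left.1 (hdisj hx hy hxy) hz)]
  · simp [hf0 x hz]

lemma exists_isLocalUnitSystem_of_subset_quasispectrum {B : Type*} [NonUnitalCStarAlgebra B] {c : B}
    (hc : IsSelfAdjoint c) {s : Finset ℝ} (hs0 : 0 ∉ s) (hs : (s : Set ℝ) ⊆ quasispectrum ℝ c) :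
    ∃ e h : s → B, IsLocalUnitSystem e h := by
  obtain ⟨f, hf1, hf⟩ := exists_continuous_bumps_of_finite (insert 0 s).finite_toSet
  have f_mul {x y : ℝ} (hx : x ∈ insert 0 s) (hy : y ∈ insert 0 s) (hxy : x ≠ y) (t : ℝ) :
      f x t = 0 ∨ f y t = 0 :=
    mul_eq_zero.1 congr($(hf hx hy hxy) t)
  have f_zero (x : s) : f x 0 = 0 :=
    (f_mul (Finset.mem_insert_of_mem x.2) (Finset.mem_insert_self 0 s)
      (ne_of_mem_of_not_mem x.2 hs0) 0).resolve_right (by simp [hf1])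
  -- `u x = 1` wherever `k x ≠ 0`, since this means `f x > 1 / 2`.
  let u : s → ℝ → ℝ := fun x t ↦ min 1 (2 * f x t)
  let k : s → ℝ → ℝ := fun x t ↦ max 0 (2 * f x t - 1)
  have u_cont (x : s) : Continuous (u x) := by fun_prop
  have k_cont (x : s) : Continuous (k x) := by fun_prop
  have u_zero (x : s) : u x 0 = 0 := by simp [u, f_zero]
  have k_zero (x : s) : k x 0 = 0 := by simp [k, f_zero]
  have u_mul_k_self (x : s) (t : ℝ) : u x t * k x t = k x t := by
    grind
  have u_mul_k_of_ne (x y : s) (hxy : x ≠ y) (t : ℝ) : u x t * k y t = 0 := by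
    rcases f_mul (Finset.mem_insert_of_mem x.2) (Finset.mem_insert_of_mem y.2)
      (Subtype.coe_injective.ne hxy) t with h | h <;> simp [u, k, h]
  have cfc_mul (x y : s) : cfcₙ (u x) c * cfcₙ (k y) c = cfcₙ (fun t ↦ u x t * k y t) c :=
    (cfcₙ_mul (u x) (k y) c (u_cont x).continuousOn (u_zero x) (k_cont y).continuousOn
      (k_zero y)).symm
  refine ⟨fun x ↦ cfcₙ (u x) c, fun x ↦ cfcₙ (k x) c, ?_⟩
  exact
    { isSelfAdjoint := fun x ↦ cfcₙ_predicate _ c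
      ne_zero := fun x hx ↦ by
        have := eqOn_of_cfcₙ_eq_cfcₙ (hx.trans (cfcₙ_zero ℝ c).symm) hc (k_cont x).continuousOn
          (k_zero x) continuousOn_const rfl (hs x.2)
        norm_num [k, hf1] at this
      commute := fun x y ↦ cfcₙ_commute_cfcₙ _ _ c
      mul_self := fun x ↦ by simp only [cfc_mul, u_mul_k_self]
      mul_of_ne := fun x y hxy ↦ by simp only [cfc_mul, u_mul_k_of_ne x y hxy, cfcₙ_const_zero] }

end LocalUnits

section Norms

variable {A : Type*} [NonUnitalCStarAlgebra A]

lemma norm_add_eq_max_of_orthogonal {a b : A} (hab : a * star b = 0) (hab' : star a * b = 0) :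
    ‖a + b‖ = max ‖a‖ ‖b‖ := by
  have hba' : star b * a = 0 := by simpa using congr(star $hab')
  have hsq : ‖a + b‖ * ‖a + b‖ = max (‖a‖ * ‖a‖) (‖b‖ * ‖b‖) := by
    simp only [← CStarRing.norm_star_mul_self]
    rw [← (IsSelfAdjoint.star_mul_self a).norm_add_eq_max (.star_mul_self b)
      (by rw [mul_assoc, ← mul_assoc a, hab, zero_mul, mul_zero])]
    simp [mul_add, add_mul, hab', hba']
  rw [← mul_self_inj (norm_nonneg _) (by positivity), hsq]
  rcases le_total ‖a‖ ‖b‖ with h | h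
  · rw [max_eq_right h, max_eq_right (mul_self_le_mul_self (norm_nonneg a) h)]
  · rw [max_eq_left h, max_eq_left (mul_self_le_mul_self (norm_nonneg b) h)]

lemma norm_one_sub_mul_self_le_one {D : Type*} [CStarAlgebra D] {b : D} (hb : IsSelfAdjoint b)
    (hb1 : ‖b‖ ≤ 1) : ‖1 - b * b‖ ≤ 1 := by
  nontriviality D
  have : 1 - b * b = cfc (fun x : ℝ ↦ 1 - x * x) b := by
    rw [cfc_sub _ _ b, cfc_mul _ _ b, cfc_const_one ℝ b, cfc_id' ℝ b]
  rw [this]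
  refine norm_cfc_le zero_le_one fun x hx ↦ ?_
  have hx1 : |x| ≤ 1 := (spectrum.norm_le_norm_of_mem hx).trans hb1
  rw [Real.norm_eq_abs, abs_le]
  constructor <;> nlinarith [abs_le.1 hx1]

lemma norm_sub_mul_self_mul_le {b : A} (hb : IsSelfAdjoint b) (hb1 : ‖b‖ ≤ 1) (x : A) :
    ‖x - b * b * x‖ ≤ ‖x‖ := by
  have hinr : ‖1 - (b : Unitization ℂ A) * b‖ ≤ 1 :=
    norm_one_sub_mul_self_le_one (hb.inr ℂ) ((norm_inr (𝕜 := ℂ) b).trans_le hb1)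
  calc ‖x - b * b * x‖ = ‖(1 - (b : Unitization ℂ A) * b) * x‖ := by
        rw [← norm_inr (𝕜 := ℂ), sub_mul, one_mul, inr_sub, inr_mul, inr_mul]
    _ ≤ ‖1 - (b : Unitization ℂ A) * b‖ * ‖(x : Unitization ℂ A)‖ := norm_mul_le _ _
    _ ≤ 1 * ‖x‖ := by rw [norm_inr]; gcongr
    _ = ‖x‖ := one_mul _

lemma norm_sub_mul_mul_self_le {b : A} (hb : IsSelfAdjoint b) (hb1 : ‖b‖ ≤ 1) (x : A) :
    ‖x - x * (b * b)‖ ≤ ‖x‖ := by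
  simpa [← norm_star (x - _), hb.star_eq, mul_assoc] using norm_sub_mul_self_mul_le hb hb1 (star x)

end Norms

section BestApproximation

variable {A : Type*} [NonUnitalCStarAlgebra A] {B : NonUnitalSubalgebra ℂ A}

lemma IsChebyshev.mem_of_orthogonal_of_norm_eq_one (hB : IsChebyshev (B : Set A)) {b y : A}
    (hbB : b ∈ B) (hb : IsSelfAdjoint b) (hb1 : ‖b‖ = 1) (hby : b * y = 0) (hyb : y * b = 0) :
    y ∈ B := by
  obtain ⟨v, hv, huniq⟩ := hB.exists_forall_norm_sub_le_imp_eq y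
  have hbv : b * v = 0 := by
    have hmem : v - b * b * v ∈ B := sub_mem hv (mul_mem (mul_mem hbB hbB) hv)
    have hnorm : ‖y - (v - b * b * v)‖ ≤ ‖y - v‖ := by
      convert norm_sub_mul_self_mul_le hb hb1.le (y - v) using 2
      simp only [mul_sub, mul_assoc, hby, mul_zero]
      abel
    have hbbv : b * b * v = 0 := sub_eq_self.1 (huniq _ hmem hnorm)
    rw [← CStarRing.star_mul_self_eq_zero_iff, star_mul, hb.star_eq, mul_assoc, ← mul_assoc b b,
      hbbv, mul_zero]
  have hvb : v * b = 0 := by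
    have hmem : v - v * (b * b) ∈ B := sub_mem hv (mul_mem hv (mul_mem hbB hbB))
    have hnorm : ‖y - (v - v * (b * b))‖ ≤ ‖y - v‖ := by
      convert norm_sub_mul_mul_self_le hb hb1.le (y - v) using 2
      simp only [sub_mul, ← mul_assoc, hyb, zero_mul]
      abel
    have hvbb : v * (b * b) = 0 := sub_eq_self.1 (huniq _ hmem hnorm)
    rw [← CStarRing.mul_star_self_eq_zero_iff, star_mul, hb.star_eq, ← mul_assoc, mul_assoc v b b,
      hvbb, zero_mul]
  let a : A := (‖y - v‖ : ℂ) • b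
  have ha : IsSelfAdjoint a := by simp [IsSelfAdjoint, a, hb.star_eq]
  have ha_norm : ‖a‖ = ‖y - v‖ := by simp [a, norm_smul, hb1]
  have hnorm : ‖y - (v - a)‖ ≤ ‖y - v‖ := by
    rw [sub_sub_eq_add_sub, add_sub_right_comm, norm_add_eq_max_of_orthogonal, ha_norm, max_self]
    · rw [ha.star_eq, mul_smul_comm, sub_mul, hyb, hvb, sub_zero, smul_zero]
    · rw [← ha.star_eq, ← star_mul, smul_mul_assoc, mul_sub, hby, hbv, sub_zero, smul_zero,
        star_zero]
  have ha0 : a = 0 := sub_eq_self.1 (huniq _ (sub_mem hv (SMulMemClass.smul_mem _ hbB)) hnorm)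
  have hyv : ‖y - v‖ = 0 := by rw [← ha_norm, ha0, norm_zero]
  rwa [sub_eq_zero.1 (norm_eq_zero.1 hyv)]

lemma IsChebyshev.mem_of_orthogonal (hB : IsChebyshev (B : Set A)) {b y : A} (hbB : b ∈ B)
    (hb : IsSelfAdjoint b) (hb0 : b ≠ 0) (hby : b * y = 0) (hyb : y * b = 0) : y ∈ B := by
  have hc : IsSelfAdjoint ((‖b‖⁻¹ : ℂ) • b) := by simp [IsSelfAdjoint, hb.star_eq]
  have hc1 : ‖(‖b‖⁻¹ : ℂ) • b‖ = 1 := by simp [norm_smul, hb0]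
  exact hB.mem_of_orthogonal_of_norm_eq_one (SMulMemClass.smul_mem _ hbB) hc hc1
    (by rw [smul_mul_assoc, hby, smul_zero]) (by rw [mul_smul_comm, hyb, smul_zero])

lemma exists_ne_some_and_ne_some {ι : Type*} [Fintype ι] (hι : 2 < Fintype.card ι)
    (i j : Option ι) : ∃ k : ι, i ≠ some k ∧ j ≠ some k := by
  classical
  obtain ⟨a, ha, hk⟩ := Finset.exists_mem_notMem_of_card_lt_card
    (s := {i, j}) (t := (Finset.univ : Finset ι).map .some)
    (Finset.card_le_two.trans_lt (by simpa))
  obtain ⟨k, -, rfl⟩ := Finset.mem_map.1 ha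
  exact ⟨k, by rintro rfl; simp at hk, by rintro rfl; simp at hk⟩

lemma IsChebyshev.mem_of_isLocalUnitSystem (hB : IsChebyshev (B : Set A)) {ι : Type*} [Fintype ι]
    (hι : 2 < Fintype.card ι) {e h : ι → A} (H : IsLocalUnitSystem e h) (hhB : ∀ i, h i ∈ B)
    (x : A) : x ∈ B := by
  have H' : IsLocalUnitSystem (fun i ↦ (e i : Unitization ℂ A)) (fun i ↦ (h i : Unitization ℂ A)) :=
    H.map (inrNonUnitalStarAlgHom ℂ A) inr_injective
  obtain ⟨u, sum_u, u_orth⟩ := H'.exists_sum_eq_one_and_orthogonal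
  have corner_mem (i j : Option ι) : (u i * inr x * u j).snd ∈ B := by
    obtain ⟨k, hik, hjk⟩ := exists_ne_some_and_ne_some hι i j
    have hcorner : inr (u i * inr x * u j).snd = u i * inr x * u j := by
      ext <;> simp
    refine hB.mem_of_orthogonal (hhB k) (H.isSelfAdjoint k) (H.ne_zero k) ?_ ?_ <;>
      apply inr_injective (R := ℂ) <;> rw [inr_mul, hcorner, inr_zero]
    · rw [← mul_assoc, ← mul_assoc, (u_orth i k hik).2, zero_mul, zero_mul]
    · rw [mul_assoc, (u_orth j k hjk).1, mul_zero]
  have x_eq : x = ∑ i, ∑ j, (u i * inr x * u j).snd := by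
    let snd := sndHom ℂ ℂ A
    calc x = snd ((∑ i, u i) * inr x * ∑ j, u j) := by rw [sum_u, one_mul, mul_one]; rfl
      _ = ∑ i, ∑ j, snd (u i * inr x * u j) := by
        simp only [Finset.sum_mul _ _ (inr x : Unitization ℂ A), Finset.sum_mul_sum, map_sum]
  rw [x_eq]
  exact sum_mem fun i _ ↦ sum_mem fun j _ ↦ corner_mem i j

end BestApproximation

/-- Let `A` be a C*-algebra and `B` a norm-closed *-subalgebra of `A`
which is a Chebyshev subspace of `A`. If `B` has no multiplicative unit, then
`B = A`. -/
theorem cebysev_nonunital_subalgebra_eq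
    {A : Type*} [NonUnitalNormedRing A] [StarRing A] [CStarRing A]
    [NormedSpace ℂ A] [IsScalarTower ℂ A A] [SMulCommClass ℂ A A]
    [StarModule ℂ A] [CompleteSpace A]
    (B : NonUnitalStarSubalgebra ℂ A) (hBclosed : IsClosed (B : Set A))
    (hCheb : ∀ x : A, ∃! v : A, v ∈ B ∧ ‖x - v‖ = Metric.infDist x (B : Set A))
    (hnounit : ¬ ∃ e ∈ B, ∀ b ∈ B, e * b = b ∧ b * e = b) :
    B = ⊤ := by
  let _ : NonUnitalCStarAlgebra A := {}
  have hnounit' : ¬ ∃ e : B, ∀ b, e * b = b ∧ b * e = b := by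
    simpa [Subtype.ext_iff] using hnounit
  obtain ⟨c, hc, s, hcard, hs0, hs⟩ := exists_finset_card_eq_subset_quasispectrum hnounit' 3
  obtain ⟨e, h, H⟩ := exists_isLocalUnitSystem_of_subset_quasispectrum hc hs0 hs
  have HA := H.map (NonUnitalStarSubalgebraClass.subtype B) Subtype.val_injective
  have hB : IsChebyshev (B.toNonUnitalSubalgebra : Set A) := hCheb
  exact eq_top_iff.2 fun x _ ↦
    hB.mem_of_isLocalUnitSystem (by simp [hcard]) HA (fun i ↦ (h i).2) x
end

section
/- Let A be a C*-algebra and let F be a JB*-subtriple of A which is a Chebyshev subspace of A. Suppose a, b, c ∈ F are nonzero and mutually orthogonal, and let F_a and F_b denote the smallest norm-closed subtriples of A containing a and b respectively. Then L(a₁,a₂)L(b₁,b₂)(x) ∈ F for all a₁, a₂ ∈ F_a, all b₁, b₂ ∈ F_b, and all x ∈ A, where L(u,v)(z) = (u v* z + z v* u)/2. -/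
/-- A norm-closed subtriple of a C*-algebra `A`: a norm-closed complex-linear
subspace closed under the triple product `{x,y,z} = (x y* z + z y* x)/2`. -/
def IsClosedSubtriple {A : Type*} [NonUnitalNormedRing A] [StarRing A]
    [NormedSpace ℂ A] (S : Set A) : Prop :=
  IsClosed S ∧ (∃ p : Submodule ℂ A, (p : Set A) = S) ∧
    ∀ x ∈ S, ∀ y ∈ S, ∀ z ∈ S, (2 : ℂ)⁻¹ • (x * star y * z + z * star y * x) ∈ S

/-!
Every `y` orthogonal to a nonzero `c ∈ F` already lies in `F`. Scale `c` to norm one. The Bergman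
operator `x ↦ (1 - c c*) x (1 - c* c)` is a contraction, maps `F` into itself because it is a
polynomial in the triple product, and fixes `y`; so by uniqueness it fixes the best approximation
`v` of `y` in `F`, and positivity turns this into `v ⊥ c`. Now `y - v` and `c` are orthogonal, hence
`‖y - v - r c‖ = max ‖y - v‖ r` for `r ≥ 0`, and with `r = ‖y - v‖` uniqueness forces `y = v`.
As orthogonality to `c` passes from `a` and `b` to their generated subtriples, `L(a₁,a₂) L(b₁,b₂) x`
is orthogonal to `c`.
-/

open Set Function

section BestApproximation

variable {X : Type*} [SeminormedAddCommGroup X] {S : Set X} {x v w : X}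

/-- `v` is a best approximation of `x` in the set `S`: a point of `S` realizing the distance from
`x` to `S`. -/
def IsBestApprox (S : Set X) (x v : X) : Prop :=
  v ∈ S ∧ ‖x - v‖ = Metric.infDist x S

/-- Chebyshev sets: every point has exactly one best approximation in `S`. A Chebyshev subspace is
a submodule whose underlying set is Chebyshev. -/
def IsChebyshevSet (S : Set X) : Prop :=
  ∀ x, ∃! v, IsBestApprox S x v

theorem IsBestApprox.of_norm_sub_le (hv : IsBestApprox S x v) (hw : w ∈ S)
    (hle : ‖x - w‖ ≤ ‖x - v‖) : IsBestApprox S x w :=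
  ⟨hw, (hle.trans hv.2.le).antisymm <| by
    simpa only [dist_eq_norm] using Metric.infDist_le_dist_of_mem hw⟩

theorem IsChebyshevSet.eq_of_norm_sub_le (hS : IsChebyshevSet S) (hv : IsBestApprox S x v)
    (hw : w ∈ S) (hle : ‖x - w‖ ≤ ‖x - v‖) : w = v :=
  (hS x).unique (hv.of_norm_sub_le hw hle) hv

theorem IsChebyshevSet.isFixedPt_of_isBestApprox (hS : IsChebyshevSet S) {T : X → X}
    (hT : LipschitzWith 1 T) (hTS : MapsTo T S S) (hx : IsFixedPt T x)
    (hv : IsBestApprox S x v) : IsFixedPt T v := by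
  refine hS.eq_of_norm_sub_le hv (hTS hv.1) ?_
  calc ‖x - T v‖ = dist (T x) (T v) := by rw [hx.eq, dist_eq_norm]
    _ ≤ dist x v := by simpa using hT.dist_le_mul x v
    _ = ‖x - v‖ := dist_eq_norm x v

end BestApproximation

section Orthogonality

variable {A : Type*} [NonUnitalSemiring A] [StarRing A] {a b c : A}

/-- Orthogonality of elements of a star ring, as in the theory of JB*-triples. -/
def TripleOrthogonal (a b : A) : Prop :=
  a * star b = 0 ∧ star b * a = 0

theorem TripleOrthogonal.symm (h : TripleOrthogonal a b) : TripleOrthogonal b a :=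
  ⟨by simpa using congrArg star h.1, by simpa using congrArg star h.2⟩

theorem TripleOrthogonal.mul_mul (ha : TripleOrthogonal a c) (hb : TripleOrthogonal b c) (x : A) :
    TripleOrthogonal (a * x * b) c :=
  ⟨by rw [mul_assoc, hb.1, mul_zero], by rw [mul_assoc, ← mul_assoc, ha.2, zero_mul]⟩

end Orthogonality

section TripleProduct

variable {A : Type*} [NonUnitalRing A] [StarRing A] [Module ℂ A]

/-- The Jordan triple product `{a, b, c}` of a C*-algebra; `tripleProduct a b x` is `L(a,b)(x)`. -/
noncomputable def tripleProduct (a b c : A) : A :=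
  (2 : ℂ)⁻¹ • (a * star b * c + c * star b * a)

/-- Subspaces closed under the triple product. -/
def IsSubtriple (F : Submodule ℂ A) : Prop :=
  ∀ x ∈ F, ∀ y ∈ F, ∀ z ∈ F, tripleProduct x y z ∈ F

/-- The Bergman operator `B(a, b) = 1 - 2 L(a, b) + Q(a) Q(b)` of a Jordan triple, where
`Q(a) x = {a, x, a}`. -/
noncomputable def bergman (a b x : A) : A :=
  x - (2 : ℂ) • tripleProduct a b x + tripleProduct a (tripleProduct b x b) a

theorem IsSubtriple.bergman_mem {F : Submodule ℂ A} (hF : IsSubtriple F) {a b x : A} (ha : a ∈ F)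
    (hb : b ∈ F) (hx : x ∈ F) : bergman a b x ∈ F :=
  F.add_mem (F.sub_mem hx (F.smul_mem _ (hF a ha b hb x hx)))
    (hF a ha _ (hF b hb x hx b hb) a ha)

theorem tripleProduct_self_right (a b : A) : tripleProduct a b a = a * star b * a := by
  rw [tripleProduct, ← two_smul ℂ, inv_smul_smul₀ two_ne_zero]

theorem bergman_eq_mul (a b x : A) :
    bergman a b x = (x - a * star b * x) - (x - a * star b * x) * (star b * a) := by
  rw [bergman, tripleProduct_self_right, tripleProduct_self_right, tripleProduct,
    smul_inv_smul₀ two_ne_zero]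
  simp only [star_mul, star_star, sub_mul, mul_assoc]
  abel

theorem bergman_sub (a b x y : A) : bergman a b (x - y) = bergman a b x - bergman a b y := by
  simp only [bergman_eq_mul, mul_sub, sub_mul]
  abel

theorem isFixedPt_bergman_iff {a b x : A} : IsFixedPt (bergman a b) x ↔
    a * star b * x + x * (star b * a) = a * star b * x * (star b * a) := by
  rw [IsFixedPt, bergman_eq_mul, sub_sub, sub_eq_self, sub_mul, ← add_sub_assoc, sub_eq_zero]

theorem TripleOrthogonal.isFixedPt_bergman {c y : A} (h : TripleOrthogonal y c) :
    IsFixedPt (bergman c c) y := by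
  have hcy : c * star c * y = 0 := by rw [mul_assoc, h.2, mul_zero]
  have hyc : y * (star c * c) = 0 := by rw [← mul_assoc, h.1, zero_mul]
  rw [isFixedPt_bergman_iff, hcy, hyc, zero_mul, add_zero]

variable [IsScalarTower ℂ A A] [SMulCommClass ℂ A A]

/-- The elements orthogonal to `d`, as a subspace. -/
def orthogonalAnnihilator (d : A) : Submodule ℂ A where
  carrier := {x | TripleOrthogonal x d}
  add_mem' hx hy :=
    ⟨by rw [add_mul, hx.1, hy.1, add_zero], by rw [mul_add, hx.2, hy.2, add_zero]⟩
  zero_mem' := ⟨zero_mul _, mul_zero _⟩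
  smul_mem' k _ hx :=
    ⟨by rw [smul_mul_assoc, hx.1, smul_zero], by rw [mul_smul_comm, hx.2, smul_zero]⟩

theorem isSubtriple_orthogonalAnnihilator (d : A) : IsSubtriple (orthogonalAnnihilator d) :=
  fun _ hx y _ _ hz ↦ Submodule.smul_mem _ _ <|
    Submodule.add_mem _ (TripleOrthogonal.mul_mul hx hz (star y))
      (TripleOrthogonal.mul_mul hz hx (star y))

theorem TripleOrthogonal.tripleProduct_tripleProduct {a₂ b₁ : A} (h : TripleOrthogonal a₂ b₁)
    (a₁ b₂ x : A) :
    tripleProduct a₁ a₂ (tripleProduct b₁ b₂ x) =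
      (2 : ℂ)⁻¹ • (2 : ℂ)⁻¹ •
        (a₁ * (star a₂ * x * star b₂) * b₁ + b₁ * (star b₂ * x * star a₂) * a₁) := by
  have houter : a₁ * star a₂ * (b₁ * star b₂ * x) = 0 := by
    rw [mul_assoc, ← mul_assoc (star a₂), ← mul_assoc (star a₂), h.symm.2]
    simp only [zero_mul, mul_zero]
  have houter' : x * star b₂ * b₁ * star a₂ * a₁ = 0 := by
    rw [mul_assoc (x * star b₂), h.symm.1, mul_zero, zero_mul]
  simp only [tripleProduct, mul_smul_comm, smul_mul_assoc, ← smul_add, mul_add, add_mul, houter,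
    houter', zero_add, add_zero]
  simp only [mul_assoc]

theorem TripleOrthogonal.tripleProduct_tripleProduct_left {a₁ a₂ b₁ c : A}
    (hac : TripleOrthogonal a₁ c) (hbc : TripleOrthogonal b₁ c) (hab : TripleOrthogonal a₂ b₁)
    (b₂ x : A) : TripleOrthogonal (tripleProduct a₁ a₂ (tripleProduct b₁ b₂ x)) c := by
  rw [hab.tripleProduct_tripleProduct]
  refine (orthogonalAnnihilator c).smul_mem _ <| (orthogonalAnnihilator c).smul_mem _ <|
    (orthogonalAnnihilator c).add_mem ?_ ?_
  · exact hac.mul_mul hbc _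
  · exact hbc.mul_mul hac _

end TripleProduct

section GeneratedSubtriple

variable {A : Type*} [NonUnitalNormedRing A] [StarRing A] [NormedSpace ℂ A]

/-- The smallest norm-closed subtriple containing `a`. -/
def generatedSubtriple (a : A) : Set A :=
  ⋂₀ {S : Set A | IsClosedSubtriple S ∧ a ∈ S}

variable [IsScalarTower ℂ A A] [SMulCommClass ℂ A A] {a b d x y : A}

theorem isClosedSubtriple_orthogonalAnnihilator (d : A) :
    IsClosedSubtriple (orthogonalAnnihilator d : Set A) := by
  refine ⟨?_, ⟨_, rfl⟩, isSubtriple_orthogonalAnnihilator d⟩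
  exact (isClosed_eq (by fun_prop) continuous_const).inter
    (isClosed_eq (by fun_prop) continuous_const)

theorem TripleOrthogonal.of_mem_generatedSubtriple (h : TripleOrthogonal a d)
    (hx : x ∈ generatedSubtriple a) : TripleOrthogonal x d :=
  hx _ ⟨isClosedSubtriple_orthogonalAnnihilator d, h⟩

theorem TripleOrthogonal.of_mem_generatedSubtriple_of_mem (h : TripleOrthogonal a b)
    (hx : x ∈ generatedSubtriple a) (hy : y ∈ generatedSubtriple b) : TripleOrthogonal x y :=
  ((h.of_mem_generatedSubtriple hx).symm.of_mem_generatedSubtriple hy).symm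

end GeneratedSubtriple

section CStarAlgebra

variable {A : Type*} [NonUnitalCStarAlgebra A] {c v x y : A}

theorem star_mul_self_mul_le_of_norm_le_one [PartialOrder A] [StarOrderedRing A] (hc : ‖c‖ ≤ 1)
    (x : A) : star (c * x) * (c * x) ≤ star x * x :=
  calc star (c * x) * (c * x) = star x * (star c * c) * x := by simp only [star_mul, mul_assoc]
    _ ≤ ‖star c * c‖ • (star x * x) := CStarAlgebra.star_left_conjugate_le_norm_smul
    _ ≤ (1 : ℝ) • (star x * x) := by
      refine smul_le_smul_of_nonneg_right ?_ (star_mul_self_nonneg x)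
      rw [CStarRing.norm_star_mul_self]
      exact mul_le_one₀ hc (norm_nonneg c) hc
    _ = star x * x := one_smul ℝ _

theorem norm_sub_mul_star_self_mul_le (hc : ‖c‖ ≤ 1) (x : A) : ‖x - c * star c * x‖ ≤ ‖x‖ := by
  let _ := CStarAlgebra.spectralOrder A
  have _ := CStarAlgebra.spectralOrderedRing A
  set w := star c * x with hw
  have hsq : star (x - c * w) * (x - c * w) ≤ star x * x := by
    have hexpand : star (x - c * w) * (x - c * w) =
        star x * x - star w * w - (star w * w - star (c * w) * (c * w)) := by
      simp only [hw, star_sub, star_mul, star_star, sub_mul, mul_sub, mul_assoc]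
    rw [hexpand]
    exact (sub_le_self _ (sub_nonneg.2 (star_mul_self_mul_le_of_norm_le_one hc w))).trans
      (sub_le_self _ (star_mul_self_nonneg w))
  have hnorm := CStarAlgebra.norm_le_norm_of_nonneg_of_le (star_mul_self_nonneg _) hsq
  rw [CStarRing.norm_star_mul_self, CStarRing.norm_star_mul_self] at hnorm
  rw [mul_assoc]
  exact (mul_self_le_mul_self_iff (norm_nonneg _) (norm_nonneg x)).2 hnorm

theorem norm_sub_mul_star_mul_self_le (hc : ‖c‖ ≤ 1) (x : A) :
    ‖x - x * (star c * c)‖ ≤ ‖x‖ := by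
  rw [← norm_star (x - _), ← norm_star x]
  simpa using norm_sub_mul_star_self_mul_le (c := star c) (by rwa [norm_star]) (star x)

theorem lipschitzWith_one_bergman (hc : ‖c‖ ≤ 1) : LipschitzWith 1 (bergman c c) := by
  refine .mk_one fun x y ↦ ?_
  rw [dist_eq_norm, dist_eq_norm, ← bergman_sub, bergman_eq_mul]
  exact (norm_sub_mul_star_mul_self_le hc _).trans (norm_sub_mul_star_self_mul_le hc _)

theorem mul_star_eq_zero_of_isFixedPt_bergman (hc : ‖c‖ ≤ 1) (hv : IsFixedPt (bergman c c) v) :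
    v * star c = 0 := by
  let _ := CStarAlgebra.spectralOrder A
  have _ := CStarAlgebra.spectralOrderedRing A
  set w := v * star c with hw
  have hprod : c * star c * (v * star v - w * star w) = -(w * star w) := by
    have hmul := congrArg (· * star v) (isFixedPt_bergman_iff.1 hv)
    simp only [hw, star_mul, star_star, add_mul, mul_sub, mul_assoc] at hmul ⊢
    rw [← hmul]
    abel
  have hnonneg : 0 ≤ v * star v - w * star w := by
    simpa [hw] using star_mul_self_mul_le_of_norm_le_one hc (star v)
  -- Both factors of `hprod` are positive and their product is self-adjoint, so they commute and
  -- the product is positive.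
  have hcomm : Commute (c * star c) (v * star v - w * star w) := by
    refine ((IsSelfAdjoint.mul_star_self c).commute_iff (.of_nonneg hnonneg)).2 ?_
    rw [hprod]
    exact (IsSelfAdjoint.mul_star_self w).neg
  have hneg : w * star w ≤ 0 := by
    rw [← neg_nonneg, ← hprod]
    exact hcomm.mul_nonneg (mul_star_self_nonneg c) hnonneg
  exact (CStarRing.mul_star_self_eq_zero_iff w).1 (hneg.antisymm (mul_star_self_nonneg w))

theorem TripleOrthogonal.of_isFixedPt_bergman (hc : ‖c‖ ≤ 1) (hv : IsFixedPt (bergman c c) v) :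
    TripleOrthogonal v c := by
  have hvc : v * star c = 0 := mul_star_eq_zero_of_isFixedPt_bergman hc hv
  have hccv : c * (star c * v) = 0 := by
    have hvcc : v * (star c * c) = 0 := by rw [← mul_assoc, hvc, zero_mul]
    simpa [mul_assoc, hvcc] using isFixedPt_bergman_iff.1 hv
  refine ⟨hvc, (CStarRing.star_mul_self_eq_zero_iff _).1 ?_⟩
  rw [star_mul, star_star, mul_assoc, hccv, mul_zero]

theorem TripleOrthogonal.norm_sub_eq_max (h : TripleOrthogonal x y) :
    ‖x - y‖ = max ‖x‖ ‖y‖ := by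
  have hsq : star (x - y) * (x - y) = star x * x + star y * y := by
    simp [sub_mul, mul_sub, h.2, h.symm.2]
  have hmul : star x * x * (star y * y) = 0 := by
    rw [mul_assoc, ← mul_assoc x, h.1, zero_mul, mul_zero]
  have hmax := (IsSelfAdjoint.star_mul_self x).norm_add_eq_max (.star_mul_self y) hmul
  rw [← hsq] at hmax
  simp only [CStarRing.norm_star_mul_self, ← sq] at hmax
  rw [← (pow_left_monotoneOn (n := 2)).map_max (norm_nonneg x) (norm_nonneg y)] at hmax
  exact (pow_left_inj₀ (norm_nonneg _) (by positivity) two_ne_zero).1 hmax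

theorem TripleOrthogonal.mem_of_norm_eq_one {F : Submodule ℂ A} (hF : IsSubtriple F)
    (hCheb : IsChebyshevSet (F : Set A)) (hc : c ∈ F) (hnorm : ‖c‖ = 1)
    (hyc : TripleOrthogonal y c) : y ∈ F := by
  obtain ⟨v, hv, -⟩ := hCheb y
  have hvc : TripleOrthogonal v c := .of_isFixedPt_bergman hnorm.le <|
    hCheb.isFixedPt_of_isBestApprox (lipschitzWith_one_bergman hnorm.le)
      (fun _ hx ↦ hF.bergman_mem hc hc hx) hyc.isFixedPt_bergman hv
  set e : A := (‖y - v‖ : ℂ) • c with he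
  have hnorm_e : ‖e‖ = ‖y - v‖ := by simp [he, norm_smul, hnorm]
  have horth : TripleOrthogonal (y - v) e :=
    .symm <| (orthogonalAnnihilator (y - v)).smul_mem _
      (TripleOrthogonal.symm ((orthogonalAnnihilator c).sub_mem hyc hvc))
  have hshift : v + e = v := by
    refine hCheb.eq_of_norm_sub_le hv (F.add_mem hv.1 (F.smul_mem _ hc)) ?_
    rw [← sub_sub, horth.norm_sub_eq_max, hnorm_e, max_self]
  have hyv : y = v := by
    rw [← sub_eq_zero, ← norm_eq_zero, ← hnorm_e, add_eq_left.1 hshift, norm_zero]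
  exact hyv ▸ hv.1

theorem TripleOrthogonal.mem_of_isChebyshevSet {F : Submodule ℂ A} (hF : IsSubtriple F)
    (hCheb : IsChebyshevSet (F : Set A)) (hc : c ∈ F) (hc0 : c ≠ 0)
    (hyc : TripleOrthogonal y c) : y ∈ F :=
  mem_of_norm_eq_one hF hCheb (F.smul_mem _ hc) (norm_smul_inv_norm (𝕜 := ℂ) hc0) <|
    .symm <| (orthogonalAnnihilator y).smul_mem _ hyc.symm

end CStarAlgebra

/-- Let `A` be a C*-algebra and `F` a JB*-subtriple of `A` which is a
Chebyshev subspace of `A`. Suppose `a, b, c ∈ F` are nonzero and mutually orthogonal,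
and let `F_a`, `F_b` be the smallest norm-closed subtriples of `A` containing `a` and
`b` respectively. Then `L(a₁,a₂) L(b₁,b₂) (x) ∈ F` for all `a₁, a₂ ∈ F_a`,
`b₁, b₂ ∈ F_b` and `x ∈ A`, where `L(u,v)(z) = (u v* z + z v* u)/2`. -/
theorem L_L_generated_subtriples_maps_into_cebysev
    {A : Type*} [NonUnitalNormedRing A] [StarRing A] [CStarRing A]
    [NormedSpace ℂ A] [IsScalarTower ℂ A A] [SMulCommClass ℂ A A]
    [StarModule ℂ A] [CompleteSpace A]
    (F : Submodule ℂ A) (hFclosed : IsClosed (F : Set A))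
    (hFtriple : ∀ x ∈ F, ∀ y ∈ F, ∀ z ∈ F,
      (2 : ℂ)⁻¹ • (x * star y * z + z * star y * x) ∈ F)
    (hCheb : ∀ x : A, ∃! v : A, v ∈ F ∧ ‖x - v‖ = Metric.infDist x (F : Set A))
    (a b c : A) (ha : a ∈ F) (hb : b ∈ F) (hc : c ∈ F)
    (ha0 : a ≠ 0) (hb0 : b ≠ 0) (hc0 : c ≠ 0)
    (hab : a * star b = 0 ∧ star b * a = 0)
    (hac : a * star c = 0 ∧ star c * a = 0)
    (hbc : b * star c = 0 ∧ star c * b = 0) :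
    ∀ a₁ ∈ ⋂₀ {S : Set A | IsClosedSubtriple S ∧ a ∈ S},
    ∀ a₂ ∈ ⋂₀ {S : Set A | IsClosedSubtriple S ∧ a ∈ S},
    ∀ b₁ ∈ ⋂₀ {S : Set A | IsClosedSubtriple S ∧ b ∈ S},
    ∀ b₂ ∈ ⋂₀ {S : Set A | IsClosedSubtriple S ∧ b ∈ S},
    ∀ x : A,
      (2 : ℂ)⁻¹ • (a₁ * star a₂ * ((2 : ℂ)⁻¹ • (b₁ * star b₂ * x + x * star b₂ * b₁))
        + ((2 : ℂ)⁻¹ • (b₁ * star b₂ * x + x * star b₂ * b₁)) * star a₂ * a₁) ∈ F := by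
  let _ : NonUnitalCStarAlgebra A := { }
  intro a₁ ha₁ a₂ ha₂ b₁ hb₁ b₂ _ x
  have ha₁c : TripleOrthogonal a₁ c := .of_mem_generatedSubtriple hac ha₁
  have hb₁c : TripleOrthogonal b₁ c := .of_mem_generatedSubtriple hbc hb₁
  have ha₂b₁ : TripleOrthogonal a₂ b₁ := .of_mem_generatedSubtriple_of_mem hab ha₂ hb₁
  exact TripleOrthogonal.mem_of_isChebyshevSet hFtriple hCheb hc hc0
    (ha₁c.tripleProduct_tripleProduct_left hb₁c ha₂b₁ b₂ x)
end
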